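/- arXiv:1305.1143 — 2 statements merged into one kernel-verified Lean document; each statement's English description precedes it below -/
import Mathlib

section
/- Let n ≥ 1, let χ be a function from the symmetric group S_n to ℂ, and let A, X = (x_{ij}) ∈ M_n(ℂ). Then the directional derivative of the immanant satisfies D d_χ(A)(X) = Σ_{i=1}^n Σ_{j=1}^n x_{ij} · d_χ(A(i|j)). -/
open scoped Classical

attribute [local instance] Matrix.normedAddCommGroup Matrix.normedSpace

noncomputable section

/-- The immanant `d_χ(A) = ∑_{σ ∈ S_n} χ(σ) ∏_i a_{i σ(i)}`. -/
def imm {n : ℕ} (χ : Equiv.Perm (Fin n) → ℂ) (A : Matrix (Fin n) (Fin n) ℂ) : ℂ :=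
  ∑ σ : Equiv.Perm (Fin n), χ σ * ∏ i, A i (σ i)

/-- `A(i|j)`: replace row `i` and column `j` of `A` by zeros, except the `(i,j)` entry,
which is set to `1`. -/
def unitRowCol {n : ℕ} (A : Matrix (Fin n) (Fin n) ℂ) (i j : Fin n) :
    Matrix (Fin n) (Fin n) ℂ :=
  Matrix.of fun p q => if p = i then (if q = j then 1 else 0) else if q = j then 0 else A p q

/-- The immanantal adjoint: its `(i,j)` entry is `d_χ(A(i|j))`. -/
def immAdj {n : ℕ} (χ : Equiv.Perm (Fin n) → ℂ) (A : Matrix (Fin n) (Fin n) ℂ) :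
    Matrix (Fin n) (Fin n) ℂ :=
  Matrix.of fun i j => imm χ (unitRowCol A i j)

/-- `A(j;X)`: replace the `j`-th column of `A` by the `j`-th column of `X`. -/
def replCol {n : ℕ} (A X : Matrix (Fin n) (Fin n) ℂ) (j : Fin n) :
    Matrix (Fin n) (Fin n) ℂ :=
  Matrix.of fun p q => if q = j then X p q else A p q

/-- `Q_{k,n}`: the strictly increasing maps from `Fin k` to `Fin n`. -/
def Qset (k n : ℕ) : Finset (Fin k → Fin n) := Finset.univ.filter StrictMono

/-- `A(α ; X^1, …, X^k)`: replace, for each `l`, the `α(l)`-th column of `A` by the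
`α(l)`-th column of `X^l`. -/
def replCols {n k : ℕ} (A : Matrix (Fin n) (Fin n) ℂ) (α : Fin k → Fin n)
    (X : Fin k → Matrix (Fin n) (Fin n) ℂ) : Matrix (Fin n) (Fin n) ℂ :=
  Matrix.of fun p q => if h : ∃ l, α l = q then X (Classical.choose h) p q else A p q

/-- The mixed immanant `Δ_χ(Y^1, …, Y^n)`. -/
def mixedImm {n : ℕ} (χ : Equiv.Perm (Fin n) → ℂ)
    (Y : Fin n → Matrix (Fin n) (Fin n) ℂ) : ℂ :=
  ((n.factorial : ℂ))⁻¹ * ∑ σ : Equiv.Perm (Fin n), imm χ (Matrix.of fun p q => Y (σ q) p q)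

/-- The family `(A, …, A, X^1, …, X^k)` with `n - k` copies of `A`. -/
def padFam {n k : ℕ} (A : Matrix (Fin n) (Fin n) ℂ) (X : Fin k → Matrix (Fin n) (Fin n) ℂ) :
    Fin n → Matrix (Fin n) (Fin n) ℂ :=
  fun i => if h : (i : ℕ) < n - k then A else X ⟨(i : ℕ) - (n - k), by have := i.isLt; omega⟩

/-- The increasing enumeration `ᾱ` of the complement of the range of `α`. -/
def complEnum {n k : ℕ} (α : Fin k → Fin n) : Fin (n - k) → Fin n :=
  if h : (Finset.univ.filter fun j => j ∉ Set.range α).card = n - k then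
    (Finset.univ.filter fun j => j ∉ Set.range α).orderEmbOfFin h
  else fun i => ⟨0, by have := i.isLt; omega⟩

/-- `X(α|β)`: the submatrix obtained by deleting rows `α(1), …, α(k)` and columns
`β(1), …, β(k)`. -/
def delSub {n k : ℕ} (X : Matrix (Fin n) (Fin n) ℂ) (α β : Fin k → Fin n) :
    Matrix (Fin (n - k)) (Fin (n - k)) ℂ :=
  X.submatrix (complEnum α) (complEnum β)

/-- `A ⊕_{α|β} B`. -/
def dSum {n k : ℕ} (α β : Fin k → Fin n) (A : Matrix (Fin k) (Fin k) ℂ)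
    (B : Matrix (Fin (n - k)) (Fin (n - k)) ℂ) : Matrix (Fin n) (Fin n) ℂ :=
  Matrix.of fun i j =>
    if hi : ∃ p, α p = i then
      (if hj : ∃ q, β q = j then A (Classical.choose hi) (Classical.choose hj) else 0)
    else if _hj : ∃ q, β q = j then 0
    else if hi' : ∃ p, complEnum α p = i then
      (if hj' : ∃ q, complEnum β q = j then B (Classical.choose hi') (Classical.choose hj')
       else 0)
    else 0

/-- `X{α|β}`: zero out the entries `(i,j)` with `i ∈ Im α, j ∉ Im β` and those with
`i ∉ Im α, j ∈ Im β`. -/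
def maskM {n k : ℕ} (X : Matrix (Fin n) (Fin n) ℂ) (α β : Fin k → Fin n) :
    Matrix (Fin n) (Fin n) ℂ :=
  Matrix.of fun i j =>
    if ((∃ p, α p = i) ∧ ¬ (∃ q, β q = j)) ∨ (¬ (∃ p, α p = i) ∧ (∃ q, β q = j)) then 0
    else X i j

/-- `X^σ_β`: the matrix whose `β(p)`-th column is the `β(p)`-th column of `X^{σ(p)}`,
all other columns being zero. -/
def zRepl {n k : ℕ} (β : Fin k → Fin n) (σ : Equiv.Perm (Fin k))
    (X : Fin k → Matrix (Fin n) (Fin n) ℂ) : Matrix (Fin n) (Fin n) ℂ :=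
  Matrix.of fun p q => if h : ∃ l, β l = q then X (σ (Classical.choose h)) p q else 0

/-- `|α| = α(1) + ⋯ + α(k)` (with `1`-based values). -/
def wt {k n : ℕ} (α : Fin k → Fin n) : ℕ := ∑ l, ((α l : ℕ) + 1)

/-- The mixed discriminant `Δ(B^1, …, B^k)`. -/
def mixedDisc {k : ℕ} (B : Fin k → Matrix (Fin k) (Fin k) ℂ) : ℂ :=
  ((k.factorial : ℂ))⁻¹ * ∑ σ : Equiv.Perm (Fin k), (Matrix.of fun p q => B (σ q) p q).det

/-- `A{id|β}`: zero out the entries of the first `k` rows in the columns outside `Im β`,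
and the entries of the remaining rows in the columns of `Im β`. -/
def maskId {n k : ℕ} (A : Matrix (Fin n) (Fin n) ℂ) (β : Fin k → Fin n) :
    Matrix (Fin n) (Fin n) ℂ :=
  Matrix.of fun i j =>
    if ((i : ℕ) < k ∧ j ∉ Set.range β) ∨ (k ≤ (i : ℕ) ∧ j ∈ Set.range β) then 0 else A i j

/-- The `m`-th compound of an `n × n` matrix, with rows and columns indexed by `Q_{m,n}`. -/
def compound (m n : ℕ) (A : Matrix (Fin n) (Fin n) ℂ) :
    Matrix {α : Fin m → Fin n // StrictMono α} {α : Fin m → Fin n // StrictMono α} ℂ :=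
  Matrix.of fun α β => (A.submatrix α.1 β.1).det

end

/-- The projection of a matrix onto its `(i, j)` entry, as a continuous linear map. -/
noncomputable def entryCLM {n : ℕ} (i j : Fin n) : Matrix (Fin n) (Fin n) ℂ →L[ℂ] ℂ :=
  (ContinuousLinearMap.proj (R := ℂ) (φ := fun _ : Fin n => ℂ) j).comp
    (ContinuousLinearMap.proj (R := ℂ) (φ := fun _ : Fin n => Fin n → ℂ) i)

theorem entryCLM_apply {n : ℕ} (i j : Fin n) (A : Matrix (Fin n) (Fin n) ℂ) :
    entryCLM i j A = A i j := rfl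

theorem hasFDerivAt_imm {n : ℕ} (χ : Equiv.Perm (Fin n) → ℂ) (A : Matrix (Fin n) (Fin n) ℂ) :
    HasFDerivAt (imm χ)
      (∑ σ : Equiv.Perm (Fin n),
        χ σ • ∑ i, (∏ p ∈ Finset.univ.erase i, A p (σ p)) • entryCLM i (σ i)) A := by
  unfold imm
  refine HasFDerivAt.fun_sum fun σ _ => HasFDerivAt.const_mul ?_ (χ σ)
  exact HasFDerivAt.finsetProd fun i _ => (entryCLM i (σ i)).hasFDerivAt

theorem prod_unitRowCol {n : ℕ} (A : Matrix (Fin n) (Fin n) ℂ) (i j : Fin n)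
    (σ : Equiv.Perm (Fin n)) :
    ∏ p, unitRowCol A i j p (σ p) =
      if σ i = j then ∏ p ∈ Finset.univ.erase i, A p (σ p) else 0 := by
  rw [← Finset.mul_prod_erase _ _ (Finset.mem_univ i)]
  split_ifs with h
  · subst h
    rw [show unitRowCol A i (σ i) i (σ i) = 1 by simp [unitRowCol], one_mul]
    refine Finset.prod_congr rfl fun p hp => ?_
    simp [unitRowCol, Finset.ne_of_mem_erase hp]
  · simp [unitRowCol, h]

/-- `D d_χ(A)(X) = ∑_{i=1}^n ∑_{j=1}^n x_{ij} d_χ(A(i|j))`. -/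
theorem immanant_deriv_entrywise (n : ℕ) (hn : 1 ≤ n) (χ : Equiv.Perm (Fin n) → ℂ)
    (A X : Matrix (Fin n) (Fin n) ℂ) :
    fderiv ℂ (imm χ) A X = ∑ i : Fin n, ∑ j : Fin n, X i j * imm χ (unitRowCol A i j) := by
  have expand (i : Fin n) : ∑ j, X i j * imm χ (unitRowCol A i j) =
      ∑ σ : Equiv.Perm (Fin n), χ σ * ((∏ p ∈ Finset.univ.erase i, A p (σ p)) * X i (σ i)) := by
    simp only [imm, prod_unitRowCol, Finset.mul_sum]
    rw [Finset.sum_comm]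
    refine Finset.sum_congr rfl fun σ _ => ?_
    simp only [mul_ite, mul_zero, Finset.sum_ite_eq, Finset.mem_univ, if_true]
    ring
  rw [(hasFDerivAt_imm χ A).fderiv, Finset.sum_congr rfl fun i _ => expand i, Finset.sum_comm]
  simp [entryCLM_apply, Finset.mul_sum]
end

section
/- (First expression, rewritten.) Let n ≥ 1, let χ be a function from the symmetric group S_n to ℂ, let 1 ≤ k ≤ n, and let A, X^1, …, X^k ∈ M_n(ℂ). Then D^k d_χ(A)(X^1,…,X^k) = (n!/(n−k)!) · Δ_χ(A; X^1,…,X^k), where Δ_χ(A; X^1,…,X^k) is the mixed immanant of n−k copies of A together with X^1,…,X^k. -/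
open scoped Classical

attribute [local instance] Matrix.normedAddCommGroup Matrix.normedSpace

/-- The average of `F` along the orbit map of a transitive action equals the average of `F`. -/
theorem MulAction.card_nsmul_sum_smul_eq {G Y M : Type*} [Group G] [Fintype G] [Fintype Y]
    [MulAction G Y] [MulAction.IsPretransitive G Y] [AddCommMonoid M] (F : Y → M) (y : Y) :
    Fintype.card Y • ∑ g : G, F (g • y) = Fintype.card G • ∑ z, F z := by
  have orbit_sum_eq (z : Y) : ∑ g : G, F (g • z) = ∑ g : G, F (g • y) := by
    obtain ⟨h, rfl⟩ := MulAction.exists_smul_eq G y z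
    simp only [← mul_smul]
    exact Equiv.sum_comp (Equiv.mulRight h) fun g => F (g • y)
  calc
    Fintype.card Y • ∑ g : G, F (g • y) = ∑ z, ∑ g : G, F (g • z) := by
      rw [Finset.sum_congr rfl fun z _ => orbit_sum_eq z, Finset.sum_const, Finset.card_univ]
    _ = ∑ g : G, ∑ z, F (g • z) := Finset.sum_comm
    _ = Fintype.card G • ∑ z, F z := by
      rw [Finset.sum_congr rfl fun g _ => (MulAction.bijective g).sum_comp F,
        Finset.sum_const, Finset.card_univ]

/-- The immanant as a continuous multilinear function of the columns. -/
noncomputable def immMultilinear {n : ℕ} (χ : Equiv.Perm (Fin n) → ℂ) :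
    ContinuousMultilinearMap ℂ (fun _ : Fin n => Fin n → ℂ) ℂ :=
  ∑ σ : Equiv.Perm (Fin n), χ σ •
    (ContinuousMultilinearMap.mkPiAlgebra ℂ (Fin n) ℂ).compContinuousLinearMap
      fun j => ContinuousLinearMap.proj (σ.symm j)

theorem immMultilinear_apply {n : ℕ} (χ : Equiv.Perm (Fin n) → ℂ) (c : Fin n → Fin n → ℂ) :
    immMultilinear χ c = imm χ (Matrix.of fun p q => c q p) := by
  simp only [immMultilinear, imm, sum_apply, smul_apply,
    ContinuousMultilinearMap.compContinuousLinearMap_apply,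
    ContinuousMultilinearMap.mkPiAlgebra_apply, ContinuousLinearMap.proj_apply, smul_eq_mul,
    Matrix.of_apply]
  refine Finset.sum_congr rfl fun σ _ => ?_
  rw [← Equiv.prod_comp σ]
  simp

/-- The continuous linear map sending a matrix, as a family of rows, to the family of its columns. -/
noncomputable def columnsCLM (n : ℕ) : (Fin n → Fin n → ℂ) →L[ℂ] (Fin n → Fin n → ℂ) :=
  ContinuousLinearMap.pi fun q => ContinuousLinearMap.pi fun p =>
    (ContinuousLinearMap.proj (φ := fun _ : Fin n => ℂ) q).comp
      (ContinuousLinearMap.proj (φ := fun _ : Fin n => Fin n → ℂ) p)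

/-- The `k`-th derivative of the immanant is the sum, over the injective choices of `k` columns, of
the immanants with these columns replaced by those of the direction matrices. -/
theorem iteratedFDeriv_imm {n k : ℕ} (χ : Equiv.Perm (Fin n) → ℂ)
    (A : Matrix (Fin n) (Fin n) ℂ) (X : Fin k → Matrix (Fin n) (Fin n) ℂ) :
    iteratedFDeriv ℂ k (imm χ) A X = ∑ e : Fin k ↪ Fin n, imm χ (replCols A e X) := by
  have imm_eq_comp : imm χ = immMultilinear χ ∘ columnsCLM n :=
    funext fun B => (immMultilinear_apply χ (columnsCLM n B)).symm
  have deriv_eq (B : Fin n → Fin n → ℂ) (Y : Fin k → Fin n → Fin n → ℂ) :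
      iteratedFDeriv ℂ k (E := Fin n → Fin n → ℂ) (imm χ) B Y =
        ∑ e : Fin k ↪ Fin n, immMultilinear χ fun q =>
          if h : q ∈ Set.range e then columnsCLM n (Y (e.toEquivRange.symm ⟨q, h⟩)) q
          else columnsCLM n B q := by
    rw [imm_eq_comp, (columnsCLM n).iteratedFDeriv_comp_right
      (immMultilinear χ).contDiff B (le_refl (k : WithTop ℕ∞)),
      (immMultilinear χ).iteratedFDeriv_eq]
    simp only [ContinuousMultilinearMap.iteratedFDeriv,
      ContinuousMultilinearMap.compContinuousLinearMap_apply, sum_apply,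
      ContinuousMultilinearMap.iteratedFDerivComponent_apply, Pi.compRightL_apply]
    congr!
  refine (deriv_eq A X).trans ?_
  simp only [immMultilinear_apply]
  refine Finset.sum_congr rfl fun e _ => congrArg (imm χ) ?_
  ext p q
  by_cases h : ∃ l, e l = q
  · have choose_eq : e.toEquivRange.symm ⟨q, h⟩ = Classical.choose h := by
      rw [Equiv.symm_apply_eq]
      exact Subtype.ext (Classical.choose_spec h).symm
    simp only [Matrix.of_apply, replCols, dif_pos h, Set.mem_range, choose_eq]
    rfl
  · simp only [Matrix.of_apply, replCols, dif_neg h, Set.mem_range]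
    rfl

/-- The embedding of `Fin k` onto the last `k` elements of `Fin n`. -/
def finTailEmb {n k : ℕ} (hkn : k ≤ n) : Fin k ↪ Fin n where
  toFun l := ⟨n - k + l, by omega⟩
  inj' l m h := by
    simp only [Fin.mk.injEq] at h
    omega

theorem of_padFam_symm_eq_replCols {n k : ℕ} (hkn : k ≤ n) (A : Matrix (Fin n) (Fin n) ℂ)
    (X : Fin k → Matrix (Fin n) (Fin n) ℂ) (σ : Equiv.Perm (Fin n)) :
    (Matrix.of fun p q => padFam A X (σ.symm q) p q) = replCols A (σ • finTailEmb hkn) X := by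
  ext p q
  obtain ⟨i, rfl⟩ := σ.surjective q
  simp only [Matrix.of_apply, replCols, padFam, Equiv.symm_apply_apply]
  by_cases h : ∃ l, (σ • finTailEmb hkn) l = σ i
  · have tail_eq : finTailEmb hkn (Classical.choose h) = i :=
      σ.injective (Classical.choose_spec h)
    have val_eq : n - k + (Classical.choose h).val = i := congrArg Fin.val tail_eq
    rw [dif_pos h, dif_neg (by omega)]
    exact congrArg (fun l => X l p (σ i)) (Fin.ext (by grind))
  · rw [dif_neg h, dif_pos]
    by_contra hi
    have tail_eq : finTailEmb hkn ⟨i - (n - k), by omega⟩ = i :=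
      Fin.ext (Nat.add_sub_of_le (not_lt.mp hi))
    exact h ⟨_, congrArg σ tail_eq⟩

/-- First expression, rewritten. For `1 ≤ k ≤ n`,
`D^k d_χ(A)(X^1, …, X^k) = (n!/(n-k)!) Δ_χ(A; X^1, …, X^k)`. -/
theorem immanant_higher_deriv_mixedImm (n k : ℕ) (hk : 1 ≤ k) (hkn : k ≤ n)
    (χ : Equiv.Perm (Fin n) → ℂ) (A : Matrix (Fin n) (Fin n) ℂ)
    (X : Fin k → Matrix (Fin n) (Fin n) ℂ) :
    iteratedFDeriv ℂ k (imm χ) A (fun i => X i) =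
      ((n.factorial / (n - k).factorial : ℕ) : ℂ) * mixedImm χ (padFam A X) := by
  have : MulAction.IsPretransitive (Equiv.Perm (Fin n)) (Fin k ↪ Fin n) :=
    Equiv.Perm.isMultiplyPretransitive (Fin n) k
  have average_eq := MulAction.card_nsmul_sum_smul_eq (G := Equiv.Perm (Fin n))
    (fun e : Fin k ↪ Fin n => imm χ (replCols A e X)) (finTailEmb hkn)
  simp only [← of_padFam_symm_eq_replCols, Fintype.card_embedding_eq, Fintype.card_perm,
    Fintype.card_fin, nsmul_eq_mul] at average_eq
  have sum_symm : ∑ σ : Equiv.Perm (Fin n), imm χ (Matrix.of fun p q => padFam A X (σ.symm q) p q) =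
      ∑ σ : Equiv.Perm (Fin n), imm χ (Matrix.of fun p q => padFam A X (σ q) p q) :=
    Equiv.sum_comp (Equiv.inv (Equiv.Perm (Fin n)))
      fun σ => imm χ (Matrix.of fun p q => padFam A X (σ q) p q)
  rw [sum_symm] at average_eq
  have factorial_ne_zero : (n.factorial : ℂ) ≠ 0 := Nat.cast_ne_zero.mpr n.factorial_ne_zero
  rw [iteratedFDeriv_imm, ← Nat.descFactorial_eq_div hkn, mixedImm, mul_left_comm, average_eq,
    inv_mul_cancel_left₀ factorial_ne_zero]
end
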